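/- arXiv:2406.07757 — 4 statements merged into one kernel-verified Lean document; each statement's English description precedes it below -/
import Mathlib

section
/- Let κ := 0.0115 and define f(z) := 1 + z·(0.5+κ)²/(1 − z·(0.5+κ)). For all real numbers x, y with x ∈ [0,1], y ∈ [0,1] and x + y ≤ 1, one has f(y) · ( 1 + (0.5+κ) · ( (0.5+κ)·x ) / ( 1 − (0.5+κ)·(x+y) ) ) ≤ f(y + x). -/
/-!
Write `c = 0.5 + κ`, so that `0 < c < 1`. Over the common denominator `(1 - c y) (1 - c (x + y))`,
which is positive because `x + y ≤ 1`, the right-hand side minus the left-hand side is exactly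
`c³ x y (1 - c) / ((1 - c y) (1 - c (x + y)))`, and this is nonnegative.
-/

noncomputable def kappa : ℝ := 0.0115

noncomputable def f (z : ℝ) : ℝ := 1 + z * (0.5 + kappa)^2 / (1 - z * (0.5 + kappa))

theorem stmt_0 (x y : ℝ) (hx0 : 0 ≤ x) (hx1 : x ≤ 1) (hy0 : 0 ≤ y) (hy1 : y ≤ 1)
    (hxy : x + y ≤ 1) :
    f y * (1 + (0.5 + kappa) * ((0.5 + kappa) * x) / (1 - (0.5 + kappa) * (x + y)))
      ≤ f (y + x) := by
  unfold f
  have hc : (0.5 + kappa : ℝ) = 0.5115 := by norm_num [kappa]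
  rw [hc]
  generalize hc' : (0.5115 : ℝ) = c
  have hc0 : 0 ≤ c := by rw [← hc']; norm_num
  have hc1 : c < 1 := by rw [← hc']; norm_num
  have hD : 0 < 1 - c * (x + y) := by nlinarith
  have hE : 0 < 1 - y * c := by nlinarith
  have hD' : 1 - (y + x) * c = 1 - c * (x + y) := by ring
  rw [hD']
  have key : 1 + (y + x) * c ^ 2 / (1 - c * (x + y))
      - (1 + y * c ^ 2 / (1 - y * c)) * (1 + c * (c * x) / (1 - c * (x + y)))
      = c ^ 3 * x * y * (1 - c) / ((1 - y * c) * (1 - c * (x + y))) := by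
    have h1 := hD.ne'
    have h2 := hE.ne'
    field_simp
    ring
  have hpos : 0 ≤ c ^ 3 * x * y * (1 - c) / ((1 - y * c) * (1 - c * (x + y))) := by
    have h3 : 0 ≤ 1 - c := by linarith
    positivity
  linarith
end

section
/- Let κ be a real number with 0 ≤ κ < 1/2. Let p, x, y, α be real numbers with 0 < p ≤ 1, 0 ≤ y ≤ 1, x ≥ 0, x ≤ p·(1 − y), and 0 ≤ α ≤ (0.5+κ)/(1 − (0.5+κ)·y). Then x·α·(1/p − 1) ≤ (0.5+κ)·(1 − x·α). -/
/-!
Write `c = 0.5 + κ < 1`. Since `1 - y ≤ 1 - c * y`, the bound on `α` gives `(1 - y) * α ≤ c`, so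
`x * α / p ≤ (1 - y) * α ≤ c`. Subtracting `x * α ≥ c * (x * α)` yields the claim.
-/

theorem stmt_1 (κ p x y α : ℝ) (hκ0 : 0 ≤ κ) (hκ : κ < 1/2)
    (hp0 : 0 < p) (hp1 : p ≤ 1) (hy0 : 0 ≤ y) (hy1 : y ≤ 1)
    (hx0 : 0 ≤ x) (hx : x ≤ p * (1 - y))
    (hα0 : 0 ≤ α) (hα : α ≤ (0.5 + κ) / (1 - (0.5 + κ) * y)) :
    x * α * (1 / p - 1) ≤ (0.5 + κ) * (1 - x * α) := by
  have hc0 : 0 ≤ 0.5 + κ := by norm_num; linarith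
  have hc1 : 0.5 + κ < 1 := by norm_num; linarith
  generalize 0.5 + κ = c at *
  have hcy : c * y ≤ y := mul_le_of_le_one_left hy0 hc1.le
  have hden : 0 < 1 - c * y := by
    linarith [mul_le_of_le_one_right hc0 hy1]
  rw [le_div_iff₀ hden] at hα
  have h1 : α * (1 - y) ≤ c :=
    (mul_le_mul_of_nonneg_left (by linarith) hα0).trans hα
  have h2 : x * α / p ≤ c := by
    rw [div_le_iff₀ hp0]
    calc x * α ≤ p * (1 - y) * α := mul_le_mul_of_nonneg_right hx hα0
      _ = α * (1 - y) * p := by ring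
      _ ≤ c * p := mul_le_mul_of_nonneg_right h1 hp0.le
  have h3 : c * (x * α) ≤ x * α := mul_le_of_le_one_left (mul_nonneg hx0 hα0) hc1.le
  calc x * α * (1 / p - 1) = x * α / p - x * α := by ring
    _ ≤ c * (1 - x * α) := by linarith
end

section
/- Let κ := 0.0115, τ := (0.5−κ)/(0.5+κ), and f(z) := 1 + z·(0.5+κ)²/(1 − z·(0.5+κ)). Let T be a natural number and p, a, b : ℕ → ℝ sequences such that for all t < T: 0 < p(t) ≤ 1, a(t) ≥ 0 and b(t) ≥ 0. Define Y(t) := Σ_{s<t} a(s), Z(t) := Σ_{s<t} b(s), α(t) := (0.5+κ)/(1 − (0.5+κ)·Y(t)), β(t) := (0.5+κ)/(1 − (0.5+κ)·Z(t)), and suppose for all t < T: a(t) ≤ p(t)·(1 − Y(t)), b(t) ≤ p(t)·(1 − Z(t)), Y(t+1) ≤ τ and Z(t+1) ≤ τ. Define P(t) := Π_{s<t} (1 − a(s)·α(s)) and Q(t) := Π_{s<t} (1 − b(s)·β(s)). Let J : ℕ → ℝ satisfy J(0) ≤ 1 and, for all t < T, J(t+1) ≤ J(t) · ( (1 − a(t)·α(t))·(1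 − b(t)·β(t)) + (1/p(t) − 1)·a(t)·α(t)·b(t)·β(t) ). Then J(T) ≤ f(Y(T)) · P(T) · Q(T). -/
noncomputable def tau : ℝ := (0.5 - kappa) / (0.5 + kappa)

theorem one_sub_mass {c y a : ℝ} (h : 1 - c * y ≠ 0) :
    1 - a * (c / (1 - c * y)) = (1 - c * (y + a)) / (1 - c * y) := by
  field_simp
  ring

theorem prod_telescope {c : ℝ} (T : ℕ) (a Y α : ℕ → ℝ)
    (hY : ∀ t, Y t = ∑ s ∈ Finset.range t, a s)
    (hα : ∀ t, α t = c / (1 - c * Y t)) (hpos : ∀ t ≤ T, 0 < 1 - c * Y t) :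
    ∏ s ∈ Finset.range T, (1 - a s * α s) = 1 - c * Y T := by
  induction T with
  | zero => simp [hY]
  | succ n ih =>
    have hn := hpos n n.le_succ
    rw [Finset.prod_range_succ, ih fun t ht => hpos t (ht.trans n.le_succ), hα,
      one_sub_mass hn.ne', hY (n + 1), Finset.sum_range_succ, ← hY n]
    field_simp

/-- The partial sums stay in `[0, m]` when `a ≥ 0` and those of positive index are at most `m`. -/
theorem partial_sum_mem {m : ℝ} (hm : 0 ≤ m) (T : ℕ) (a Y : ℕ → ℝ)
    (hY : ∀ t, Y t = ∑ s ∈ Finset.range t, a s) (ha : ∀ t < T, 0 ≤ a t)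
    (hYm : ∀ t < T, Y (t + 1) ≤ m) : ∀ t ≤ T, 0 ≤ Y t ∧ Y t ≤ m := by
  intro t ht
  refine ⟨?_, ?_⟩
  · rw [hY]
    exact Finset.sum_nonneg fun s hs => ha s ((Finset.mem_range.1 hs).trans_le ht)
  · cases t with
    | zero => simpa [hY] using hm
    | succ n => exact hYm n ht

/-- One step of the induction: the telescoped form of the bound is preserved by the recursion
for the joint probability. -/
theorem step_bound {c p y z a b j j' : ℝ} (hc0 : 0 < c) (hc1 : c < 1)
    (hp0 : 0 < p) (hp1 : p ≤ 1) (ha : 0 ≤ a) (hb : 0 ≤ b) (hy : 0 ≤ y) (hz : 0 ≤ z)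
    (hy1 : y + a ≤ 1) (hz1 : z + b ≤ 1) (hbz : b ≤ p * (1 - z))
    (hj : j ≤ (1 - c * (1 - c) * y) * (1 - c * z))
    (hj' : j' ≤ j * ((1 - a * (c / (1 - c * y))) * (1 - b * (c / (1 - c * z)))
      + (1 / p - 1) * a * (c / (1 - c * y)) * b * (c / (1 - c * z)))) :
    j' ≤ (1 - c * (1 - c) * (y + a)) * (1 - c * (z + b)) := by
  have pos_of_le_one : ∀ x : ℝ, x ≤ 1 → 0 < 1 - c * x := fun x hx => by nlinarith
  have hcy := pos_of_le_one y (by linarith)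
  have hcz := pos_of_le_one z (by linarith)
  have hcy' := pos_of_le_one _ hy1
  have hcz' := pos_of_le_one _ hz1
  have hr : 0 ≤ 1 / p - 1 := by
    rw [sub_nonneg, le_div_iff₀ hp0]
    linarith
  have hrb : (1 / p - 1) * b ≤ 1 - c * (z + b) := by
    have h1 : b / p ≤ 1 - z := by
      rw [div_le_iff₀ hp0]
      linarith
    have h2 : (1 / p - 1) * b = b / p - b := by ring
    nlinarith
  generalize 1 / p - 1 = r at *
  have hfac : (1 - a * (c / (1 - c * y))) * (1 - b * (c / (1 - c * z)))
      + r * a * (c / (1 - c * y)) * b * (c / (1 - c * z))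
      = ((1 - c * (y + a)) * (1 - c * (z + b)) + r * b * (c ^ 2 * a))
        / ((1 - c * y) * (1 - c * z)) := by
    rw [one_sub_mass hcy.ne', one_sub_mass hcz.ne']
    field_simp
  rw [hfac] at hj'
  -- The recursion factor is nonnegative, so the bound on `j` may be multiplied by it even if `j < 0`.
  have hfac0 : 0 ≤ ((1 - c * (y + a)) * (1 - c * (z + b)) + r * b * (c ^ 2 * a))
      / ((1 - c * y) * (1 - c * z)) := by positivity
  refine hj'.trans ((mul_le_mul_of_nonneg_right hj hfac0).trans ?_)
  have hk0 : 0 ≤ c * (1 - c) * y := by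
    have : 0 ≤ 1 - c := by linarith
    positivity
  have hmain : (1 - c * (1 - c) * y) * (r * b * (c ^ 2 * a))
      ≤ (1 - c * (z + b)) * (c ^ 2 * a) :=
    calc (1 - c * (1 - c) * y) * (r * b * (c ^ 2 * a))
        ≤ 1 * (r * b * (c ^ 2 * a)) :=
          mul_le_mul_of_nonneg_right (by linarith) (by positivity)
      _ ≤ (1 - c * (z + b)) * (c ^ 2 * a) := by
          rw [one_mul]
          exact mul_le_mul_of_nonneg_right hrb (by positivity)
  rw [mul_div_assoc', div_le_iff₀ (by positivity)]
  -- Up to the common factor `1 - c * z`, the goal is `hmain` plus the identity for `c ^ 2 * a`.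
  linarith [mul_le_mul_of_nonneg_right hmain hcz.le]

theorem stmt_8 (T : ℕ) (p a b : ℕ → ℝ)
    (hp0 : ∀ t < T, 0 < p t) (hp1 : ∀ t < T, p t ≤ 1)
    (ha : ∀ t < T, 0 ≤ a t) (hb : ∀ t < T, 0 ≤ b t)
    (Y Z : ℕ → ℝ)
    (hY : ∀ t, Y t = ∑ s ∈ Finset.range t, a s)
    (hZ : ∀ t, Z t = ∑ s ∈ Finset.range t, b s)
    (α β : ℕ → ℝ)
    (hα : ∀ t, α t = (0.5 + kappa) / (1 - (0.5 + kappa) * Y t))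
    (hβ : ∀ t, β t = (0.5 + kappa) / (1 - (0.5 + kappa) * Z t))
    (haY : ∀ t < T, a t ≤ p t * (1 - Y t))
    (hbZ : ∀ t < T, b t ≤ p t * (1 - Z t))
    (hYτ : ∀ t < T, Y (t + 1) ≤ tau) (hZτ : ∀ t < T, Z (t + 1) ≤ tau)
    (P Q : ℕ → ℝ)
    (hP : ∀ t, P t = ∏ s ∈ Finset.range t, (1 - a s * α s))
    (hQ : ∀ t, Q t = ∏ s ∈ Finset.range t, (1 - b s * β s))
    (J : ℕ → ℝ) (hJ0 : J 0 ≤ 1)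
    (hJ : ∀ t < T, J (t + 1) ≤
      J t * ((1 - a t * α t) * (1 - b t * β t) + (1 / p t - 1) * a t * α t * b t * β t)) :
    J T ≤ f (Y T) * P T * Q T := by
  have hc0 : (0 : ℝ) < 0.5 + kappa := by norm_num [kappa]
  have hc1 : (0.5 : ℝ) + kappa < 1 := by norm_num [kappa]
  have ht0 : 0 ≤ tau := by norm_num [tau, kappa]
  have ht1 : tau < 1 := by norm_num [tau, kappa]
  have hYb := partial_sum_mem ht0 T a Y hY ha hYτ
  have hZb := partial_sum_mem ht0 T b Z hZ hb hZτ
  have hf : ∀ y, f y = 1 + y * (0.5 + kappa) ^ 2 / (1 - y * (0.5 + kappa)) := fun _ => rfl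
  generalize (0.5 : ℝ) + kappa = c at *
  have hYpos : ∀ t ≤ T, 0 < 1 - c * Y t := fun t ht => by nlinarith [hYb t ht]
  have hZpos : ∀ t ≤ T, 0 < 1 - c * Z t := fun t ht => by nlinarith [hZb t ht]
  have hJb : ∀ t ≤ T, J t ≤ (1 - c * (1 - c) * Y t) * (1 - c * Z t) := by
    intro t
    induction t with
    | zero => simpa [hY, hZ] using hJ0
    | succ n ih =>
      intro hn
      have hY' : Y (n + 1) = Y n + a n := by rw [hY, hY n, Finset.sum_range_succ]
      have hZ' : Z (n + 1) = Z n + b n := by rw [hZ, hZ n, Finset.sum_range_succ]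
      have hj' := hJ n hn
      have hy1 := (hYb (n + 1) hn).2
      have hz1 := (hZb (n + 1) hn).2
      rw [hα, hβ] at hj'
      rw [hY'] at hy1 ⊢
      rw [hZ'] at hz1 ⊢
      exact step_bound hc0 hc1 (hp0 n hn) (hp1 n hn) (ha n hn) (hb n hn)
        (hYb n (Nat.le_of_lt hn)).1 (hZb n (Nat.le_of_lt hn)).1 (by linarith) (by linarith)
        (hbZ n hn) (ih (Nat.le_of_lt hn)) hj'
  have hne : 1 - Y T * c ≠ 0 := by
    rw [mul_comm]
    exact (hYpos T le_rfl).ne'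
  have hfP : f (Y T) * (1 - c * Y T) = 1 - c * (1 - c) * Y T := by
    rw [hf, mul_comm c (Y T), add_mul, div_mul_cancel₀ _ hne]
    ring
  rw [hP, hQ, prod_telescope T a Y α hY hα hYpos, prod_telescope T b Z β hZ hβ hZpos, hfP]
  exact hJb T le_rfl
end

section
/- For every real ε with 0 ≤ ε ≤ 0.1, setting κ := 0.0115 − ε, τ := (0.5−κ)/(0.5+κ), and γ_κ := 1 + (0.5+κ)²/(0.5−κ), one has 6ε ≤ 2τ − 1 − γ_κ · (1 + 2·(2κ)/(0.5−κ) + (2κ)²/(0.5−κ)²) · (0.5+κ) − 2κ/(0.5−κ). -/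
/-!
Put `a = 0.5 - κ` and `b = 0.5 + κ`, so that `a + b = 1`, `2κ = b - a` and
`1 + 2(2κ)/a + (2κ)²/a² = (b/a)²`. The right-hand side minus `6ε` is then
`(2a⁴ - (a + b²)b⁴ - a²b² - 6εa³b) / (a³b)`, whose denominator is positive for `0 ≤ ε ≤ 0.1`.
The numerator is a polynomial in `ε` of degree `6` whose only negative coefficient is that of `ε⁶`,
and `ε⁶ ≤ 0.1 ε⁵` lets the term of degree `5` absorb it.
-/

/-- The numerator of the difference of the two sides, with `a = 0.4885 + ε`, `b = 0.5115 - ε`. -/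
lemma numerator_nonneg (ε : ℝ) (hε0 : 0 ≤ ε) (hε1 : ε ≤ 0.1) :
    0 ≤ 2 * (0.4885 + ε) ^ 4 - ((0.4885 + ε) + (0.5115 - ε) ^ 2) * (0.5115 - ε) ^ 4
      - (0.4885 + ε) ^ 2 * (0.5115 - ε) ^ 2 - 6 * ε * (0.4885 + ε) ^ 3 * (0.5115 - ε) := by
  have h2 : 0 ≤ ε ^ 2 := by positivity
  have h3 : 0 ≤ ε ^ 3 := by positivity
  have h4 : 0 ≤ ε ^ 4 := by positivity
  have h5 : 0 ≤ ε ^ 5 := by positivity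
  have g6 : ε ^ 6 ≤ 0.1 * ε ^ 5 := by nlinarith
  ring_nf
  linarith

theorem stmt_12 (ε : ℝ) (hε0 : 0 ≤ ε) (hε1 : ε ≤ 0.1) :
    6 * ε ≤ 2 * ((0.5 - (0.0115 - ε)) / (0.5 + (0.0115 - ε))) - 1 -
      (1 + (0.5 + (0.0115 - ε))^2 / (0.5 - (0.0115 - ε))) *
        (1 + 2 * (2 * (0.0115 - ε)) / (0.5 - (0.0115 - ε)) +
          (2 * (0.0115 - ε))^2 / (0.5 - (0.0115 - ε))^2) * (0.5 + (0.0115 - ε)) -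
      2 * (0.0115 - ε) / (0.5 - (0.0115 - ε)) := by
  have hn := numerator_nonneg ε hε0 hε1
  have ea : (0.5 - (0.0115 - ε) : ℝ) = 0.4885 + ε := by ring
  have eb : (0.5 + (0.0115 - ε) : ℝ) = 0.5115 - ε := by ring
  have ek : 2 * (0.0115 - ε) = (0.5115 - ε) - (0.4885 + ε) := by ring
  rw [ea, eb, ek]
  have ha : 0 < 0.4885 + ε := by linarith
  have hb : 0 < 0.5115 - ε := by linarith
  -- Make `a` and `b` opaque, so that clearing denominators is an identity in `a`, `b`, `ε`.
  generalize 0.4885 + ε = a at *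
  generalize 0.5115 - ε = b at *
  rw [← sub_nonneg]
  have key : 2 * (a / b) - 1 - (1 + b ^ 2 / a) * (1 + 2 * (b - a) / a + (b - a) ^ 2 / a ^ 2) * b
      - (b - a) / a - 6 * ε
      = (2 * a ^ 4 - (a + b ^ 2) * b ^ 4 - a ^ 2 * b ^ 2 - 6 * ε * a ^ 3 * b) / (a ^ 3 * b) := by
    field_simp
    ring
  rw [key]
  positivity
end
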